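/- Under the feature and core-state assumptions with ε_approx ≤ 1/16, suppose θ ∈ ℝ^d satisfies ‖Φθ − v*‖_∞ ≤ 2ε_approx/(1−γ) and W*r + W*(γP − E)Φθ ≤ 0 (feasibility for LRALP), and all rewards satisfy |r_{sa}| ≤ 1. Then ‖Φ*θ‖₂ ≤ (9/8)√m/(1−γ), and for every probability distribution μ ∈ Δ_𝒮 over states, μᵀΦθ − V_LRALP(μ) ≤ 12·ε_approx/(1−γ). -/

import Mathlib

open scoped BigOperators

namespace MDPPlan

variable {S A : Type} [Fintype S] [Fintype A] [DecidableEq S] {d m : ℕ}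

/-- `φ_sᵀθ`: dot product of the feature vector of state `s` with weights `θ`. -/
noncomputable def phiDot (Φ : S → Fin d → ℝ) (θ : Fin d → ℝ) (s : S) : ℝ :=
  ∑ j, Φ s j * θ j

/-- The sequence `𝒮₊ = (s₀, s₁, …, s_m)`: `none` is the planning state `s₀`,
`some i` is the `i`-th core state. -/
def splus (s₀ : S) (c : Fin m → S) : Option (Fin m) → S := fun o => o.elim s₀ c

/-- State-transition matrix `P_π` of a stationary policy `π`. -/
noncomputable def Ppi (P : S → A → S → ℝ) (π : S → A → ℝ) : Matrix S S ℝ :=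
  Matrix.of fun s s' => ∑ a, π s a * P s a s'

/-- Expected reward `r_π` of a stationary policy `π`. -/
noncomputable def rpi (r : S → A → ℝ) (π : S → A → ℝ) : S → ℝ :=
  fun s => ∑ a, π s a * r s a

/-- `π` is a stationary policy: each `π(·|s)` is a probability distribution over actions. -/
def IsPolicy (π : S → A → ℝ) : Prop := (∀ s a, 0 ≤ π s a) ∧ ∀ s, ∑ a, π s a = 1

/-- Value function `v_π = Σ_{t≥0} (γ P_π)^t r_π`. -/
noncomputable def vpi (γ : ℝ) (P : S → A → S → ℝ) (r : S → A → ℝ) (π : S → A → ℝ) :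
    S → ℝ :=
  ∑' t : ℕ, ((γ • Ppi P π) ^ t).mulVec (rpi r π)

/-- Optimal value function `v*(s) = sup_π v_π(s)`. -/
noncomputable def vstar (γ : ℝ) (P : S → A → S → ℝ) (r : S → A → ℝ) : S → ℝ :=
  fun s => ⨆ π : {π : S → A → ℝ // IsPolicy π}, vpi γ P r π.1 s

/-- Optimal action-value function `q*(s,a) = r_{sa} + γ P_{sa} v*`. -/
noncomputable def qstar (γ : ℝ) (P : S → A → S → ℝ) (r : S → A → ℝ) (s : S) (a : A) : ℝ :=
  r s a + γ * ∑ s', P s a s' * vstar γ P r s'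

/-- `ε_approx = inf_θ max_s |v*(s) − φ_sᵀθ|`. -/
noncomputable def epsApprox (Φ : S → Fin d → ℝ) (v : S → ℝ) : ℝ :=
  ⨅ θ : Fin d → ℝ, ⨆ s : S, |v s - phiDot Φ θ s|

/-- Membership in `Λ`: nonnegative and the `s₀`-block sums to one. -/
def InLambda (lam : Option (Fin m) × A → ℝ) : Prop :=
  (∀ p, 0 ≤ lam p) ∧ ∑ a, lam (none, a) = 1

/-- The CoreLP equality constraint `φ_{s₀}ᵀ + λᵀW(γP − E)Φ = 0ᵀ`. -/
def CoreLPConstraint (γ : ℝ) (P : S → A → S → ℝ) (Φ : S → Fin d → ℝ) (s₀ : S)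
    (c : Fin m → S) (lam : Option (Fin m) × A → ℝ) : Prop :=
  ∀ j : Fin d, Φ s₀ j + ∑ p : Option (Fin m) × A,
    lam p * (γ * (∑ s', P (splus s₀ c p.1) p.2 s' * Φ s' j) - Φ (splus s₀ c p.1) j) = 0

/-- The CoreLP objective `λᵀWr`. -/
noncomputable def CoreLPObj (r : S → A → ℝ) (s₀ : S) (c : Fin m → S)
    (lam : Option (Fin m) × A → ℝ) : ℝ :=
  ∑ p : Option (Fin m) × A, lam p * r (splus s₀ c p.1) p.2

/-- The optimal value `V†` of CoreLP. -/
noncomputable def Vdagger (γ : ℝ) (P : S → A → S → ℝ) (r : S → A → ℝ)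
    (Φ : S → Fin d → ℝ) (s₀ : S) (c : Fin m → S) : ℝ :=
  sSup {x : ℝ | ∃ lam : Option (Fin m) × A → ℝ,
    InLambda lam ∧ CoreLPConstraint γ P Φ s₀ c lam ∧ x = CoreLPObj r s₀ c lam}

/-- Feasibility for LRALP: `W*r + W*(γP − E)Φθ ≤ 0`. -/
def LRALPFeasible (γ : ℝ) (P : S → A → S → ℝ) (r : S → A → ℝ) (Φ : S → Fin d → ℝ)
    (c : Fin m → S) (θ : Fin d → ℝ) : Prop :=
  ∀ (i : Fin m) (a : A),
    r (c i) a + (γ * (∑ s', P (c i) a s' * phiDot Φ θ s') - phiDot Φ θ (c i)) ≤ 0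

/-- `V_LRALP(μ) = min { μᵀΦθ : θ feasible for LRALP }`. -/
noncomputable def VLRALP (γ : ℝ) (P : S → A → S → ℝ) (r : S → A → ℝ) (Φ : S → Fin d → ℝ)
    (c : Fin m → S) (μ : S → ℝ) : ℝ :=
  sInf {x : ℝ | ∃ θ : Fin d → ℝ, LRALPFeasible γ P r Φ c θ ∧ x = ∑ s, μ s * phiDot Φ θ s}

/-- The Saddle CoreLP objective `f(λ,θ) = λᵀWr + φ_{s₀}ᵀθ + λᵀW(γP − E)Φθ`. -/
noncomputable def fObj (γ : ℝ) (P : S → A → S → ℝ) (r : S → A → ℝ) (Φ : S → Fin d → ℝ)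
    (s₀ : S) (c : Fin m → S) (lam : Option (Fin m) × A → ℝ) (θ : Fin d → ℝ) : ℝ :=
  CoreLPObj r s₀ c lam + phiDot Φ θ s₀ +
    ∑ p : Option (Fin m) × A,
      lam p * (γ * (∑ s', P (splus s₀ c p.1) p.2 s' * phiDot Φ θ s') -
        phiDot Φ θ (splus s₀ c p.1))

/-- The Saddle LRALP objective `g_μ(λ*,θ) = λ*ᵀW*r + μᵀΦθ + λ*ᵀW*(γP − E)Φθ`. -/
noncomputable def gObj (γ : ℝ) (P : S → A → S → ℝ) (r : S → A → ℝ) (Φ : S → Fin d → ℝ)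
    (c : Fin m → S) (μ : S → ℝ) (lamS : Fin m × A → ℝ) (θ : Fin d → ℝ) : ℝ :=
  (∑ p : Fin m × A, lamS p * r (c p.1) p.2) + (∑ s, μ s * phiDot Φ θ s) +
    ∑ p : Fin m × A,
      lamS p * (γ * (∑ s', P (c p.1) p.2 s' * phiDot Φ θ s') - phiDot Φ θ (c p.1))

/-- The `𝓑`-bounded duality gap `δ_𝓑(λ̂,θ̂) = max_{λ∈Λ_γ} f(λ,θ̂) − inf_{θ∈𝓑} f(λ̂,θ)`. -/
noncomputable def dualityGap (γ : ℝ) (P : S → A → S → ℝ) (r : S → A → ℝ)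
    (Φ : S → Fin d → ℝ) (s₀ : S) (c : Fin m → S) (Bset : Set (Fin d → ℝ))
    (lamHat : Option (Fin m) × A → ℝ) (θHat : Fin d → ℝ) : ℝ :=
  sSup {x : ℝ | ∃ lam : Option (Fin m) × A → ℝ,
      InLambda lam ∧ (∑ p, |lam p|) = 1 / (1 - γ) ∧ x = fObj γ P r Φ s₀ c lam θHat} -
    sInf {x : ℝ | ∃ θ ∈ Bset, x = fObj γ P r Φ s₀ c lamHat θ}

/-!
Suppose `|v* - Φθ'| ≤ e`, and let `θ` be feasible. Bellman's inequality `v* ≤ max_a q*(·, a)` gives,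
at each core state `s`, an action `a` for which `z := Φθ - Φθ' + (1 + γ) e / (1 - γ)` satisfies
`γ P_{sa} z ≤ z(s)`. Because the constants lie in the span of the features, the rows of `Z` are
probability vectors, so `z` is at every state an average of its values at the core states. At a
minimizer of `z` this reads `γ min z ≤ min z`, hence `z ≥ 0`. Thus every feasible `θ` has
`Φθ ≥ v* - 2e / (1 - γ)`, so no feasible value `μᵀΦθ` lies far below `μᵀv*`.
-/

open Matrix Finset

section StdSimplex

variable {𝕜 ι : Type*} [Field 𝕜] [LinearOrder 𝕜] [IsStrictOrderedRing 𝕜] [Fintype ι]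

theorem dotProduct_le_of_mem_stdSimplex {w f : ι → 𝕜} {B : 𝕜} (hw : w ∈ stdSimplex 𝕜 ι)
    (hf : ∀ i, f i ≤ B) : w ⬝ᵥ f ≤ B :=
  (convex_Iic B).sum_mem (fun i _ => hw.1 i) hw.2 fun i _ => hf i

theorem le_dotProduct_of_mem_stdSimplex {w f : ι → 𝕜} {B : 𝕜} (hw : w ∈ stdSimplex 𝕜 ι)
    (hf : ∀ i, B ≤ f i) : B ≤ w ⬝ᵥ f :=
  (convex_Ici B).sum_mem (fun i _ => hw.1 i) hw.2 fun i _ => hf i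

theorem nonneg_of_discounted_average_le_core {S : Type*} [Fintype S] {γ : 𝕜} (hγ0 : 0 ≤ γ)
    (hγ1 : γ < 1) {z : S → 𝕜} {c : ι → S} {Z : S → ι → 𝕜} (hZ : ∀ s, Z s ∈ stdSimplex 𝕜 ι)
    (hzZ : ∀ s, z s = Z s ⬝ᵥ z ∘ c)
    (hzc : ∀ i, ∃ p ∈ stdSimplex 𝕜 S, γ * (p ⬝ᵥ z) ≤ z (c i)) (s : S) : 0 ≤ z s := by
  have : Nonempty S := ⟨s⟩
  obtain ⟨s₀, hs₀⟩ := Finite.exists_min z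
  have hcore (i : ι) : γ * z s₀ ≤ z (c i) := by
    obtain ⟨p, hp, hpz⟩ := hzc i
    exact (mul_le_mul_of_nonneg_left (le_dotProduct_of_mem_stdSimplex hp hs₀) hγ0).trans hpz
  have hle : γ * z s₀ ≤ z s₀ := by
    nth_rw 2 [hzZ s₀]
    exact le_dotProduct_of_mem_stdSimplex (hZ s₀) hcore
  have hmin : 0 ≤ (1 - γ) * z s₀ := by linarith
  exact (nonneg_of_mul_nonneg_right hmin (sub_pos.2 hγ1)).trans (hs₀ s)

end StdSimplex

theorem sqrt_sum_sq_le_sqrt_card_mul {ι : Type*} [Fintype ι] {f : ι → ℝ} {B : ℝ} (hB : 0 ≤ B)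
    (hf : ∀ i, |f i| ≤ B) : √(∑ i, f i ^ 2) ≤ √(Fintype.card ι) * B := by
  calc √(∑ i, f i ^ 2) ≤ √(Fintype.card ι * B ^ 2) := by
        refine Real.sqrt_le_sqrt ?_
        rw [← nsmul_eq_mul]
        exact sum_le_card_nsmul _ _ _ fun i _ => sq_le_sq.2 ((hf i).trans (le_abs_self B))
    _ = √(Fintype.card ι) * B := by rw [Real.sqrt_mul (Nat.cast_nonneg _), Real.sqrt_sq hB]

section LinftyOpNorm

open scoped Matrix.Norms.Operator

variable {n : Type*} [Fintype n] [DecidableEq n]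

theorem tsum_pow_mulVec {N : Matrix n n ℝ} (hN : ‖N‖ < 1) (x : n → ℝ) :
    ∑' t : ℕ, N ^ t *ᵥ x = x + N *ᵥ ∑' t : ℕ, N ^ t *ᵥ x := by
  have hsum : ∑' t : ℕ, N ^ t *ᵥ x = (∑' t : ℕ, N ^ t) *ᵥ x :=
    ((summable_geometric_of_norm_lt_one hN).map_tsum (mulVec.addMonoidHomLeft x)
      (continuous_id.matrix_mulVec continuous_const)).symm
  have hgeom : ∑' t : ℕ, N ^ t = 1 + N * ∑' t : ℕ, N ^ t :=
    eq_add_of_sub_eq' ((geom_series_mul_shift N hN).trans (geom_series_succ N hN)).symm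
  rw [hsum, mulVec_mulVec]
  nth_rw 1 [hgeom]
  rw [add_mulVec, one_mulVec]

omit [DecidableEq n] in
theorem linfty_opNorm_le_one_of_mem_stdSimplex {m : Type*} [Fintype m] {M : Matrix m n ℝ}
    (hM : ∀ i, M i ∈ stdSimplex ℝ n) : ‖M‖ ≤ 1 := by
  rw [← coe_nnnorm, linfty_opNNNorm_def, NNReal.coe_le_one]
  refine Finset.sup_le fun i _ => ?_
  rw [← NNReal.coe_le_one, NNReal.coe_sum, ← (hM i).2]
  exact sum_le_sum fun j _ => (Real.norm_of_nonneg ((hM i).1 j)).le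

end LinftyOpNorm

section Value

open scoped Matrix.Norms.Operator

variable {γ : ℝ} {P : S → A → S → ℝ} {r : S → A → ℝ} {π : S → A → ℝ}

omit [Fintype S] [DecidableEq S] in
theorem isPolicy_iff : IsPolicy π ↔ ∀ s, π s ∈ stdSimplex ℝ A :=
  forall_and.symm

instance nonempty_policy [Nonempty A] : Nonempty {π : S → A → ℝ // IsPolicy π} := by
  classical
  exact ⟨fun _ => Pi.single (Classical.arbitrary A) 1,
    isPolicy_iff.2 fun _ => single_mem_stdSimplex ℝ _⟩

omit [DecidableEq S] in
theorem norm_rpi_le (hπ : IsPolicy π) : ‖rpi r π‖ ≤ ‖r‖ := by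
  refine (pi_norm_le_iff_of_nonneg (norm_nonneg r)).2 fun s => ?_
  have hr (a : A) : |r s a| ≤ ‖r‖ := (norm_le_pi_norm (r s) a).trans (norm_le_pi_norm r s)
  exact abs_le.2
    ⟨le_dotProduct_of_mem_stdSimplex (isPolicy_iff.1 hπ s) fun a => (abs_le.1 (hr a)).1,
      dotProduct_le_of_mem_stdSimplex (isPolicy_iff.1 hπ s) fun a => (abs_le.1 (hr a)).2⟩

omit [Fintype S] [DecidableEq S] in
theorem Ppi_row (s : S) : Ppi P π s = ∑ a, π s a • P s a := by
  ext s'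
  simp only [Ppi, of_apply, Finset.sum_apply, Pi.smul_apply, smul_eq_mul]

omit [DecidableEq S] in
theorem Ppi_mem_stdSimplex (hP : ∀ s a, P s a ∈ stdSimplex ℝ S) (hπ : IsPolicy π) (s : S) :
    Ppi P π s ∈ stdSimplex ℝ S := by
  rw [Ppi_row]
  exact (convex_stdSimplex ℝ S).sum_mem (fun a _ => hπ.1 s a) (hπ.2 s) fun a _ => hP s a

theorem norm_smul_Ppi_le (hγ : 0 ≤ γ) (hP : ∀ s a, P s a ∈ stdSimplex ℝ S) (hπ : IsPolicy π) :
    ‖γ • Ppi P π‖ ≤ γ := by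
  rw [norm_smul, Real.norm_of_nonneg hγ]
  exact mul_le_of_le_one_right hγ
    (linfty_opNorm_le_one_of_mem_stdSimplex (Ppi_mem_stdSimplex hP hπ))

theorem vpi_eq_rpi_add (hγ0 : 0 ≤ γ) (hγ1 : γ < 1) (hP : ∀ s a, P s a ∈ stdSimplex ℝ S)
    (hπ : IsPolicy π) : vpi γ P r π = rpi r π + (γ • Ppi P π) *ᵥ vpi γ P r π :=
  tsum_pow_mulVec ((norm_smul_Ppi_le hγ0 hP hπ).trans_lt hγ1) _

theorem vpi_apply_eq_dotProduct (hγ0 : 0 ≤ γ) (hγ1 : γ < 1) (hP : ∀ s a, P s a ∈ stdSimplex ℝ S)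
    (hπ : IsPolicy π) (s : S) :
    vpi γ P r π s = π s ⬝ᵥ fun a => r s a + γ * (P s a ⬝ᵥ vpi γ P r π) := by
  have hrow : (Ppi P π *ᵥ vpi γ P r π) s = ∑ a, π s a * (P s a ⬝ᵥ vpi γ P r π) := by
    change Ppi P π s ⬝ᵥ _ = _
    simp only [Ppi_row, sum_dotProduct, smul_dotProduct, smul_eq_mul]
  calc vpi γ P r π s = rpi r π s + γ * (Ppi P π *ᵥ vpi γ P r π) s := by
        conv_lhs => rw [vpi_eq_rpi_add hγ0 hγ1 hP hπ, smul_mulVec]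
        rfl
    _ = π s ⬝ᵥ fun a => r s a + γ * (P s a ⬝ᵥ vpi γ P r π) := by
        rw [hrow, rpi, mul_sum, ← sum_add_distrib]
        exact sum_congr rfl fun a _ => by ring

theorem norm_vpi_le (hγ0 : 0 ≤ γ) (hγ1 : γ < 1) (hP : ∀ s a, P s a ∈ stdSimplex ℝ S)
    (hπ : IsPolicy π) : ‖vpi γ P r π‖ ≤ ‖r‖ / (1 - γ) := by
  have hstep : ‖vpi γ P r π‖ ≤ ‖r‖ + γ * ‖vpi γ P r π‖ :=
    calc ‖vpi γ P r π‖ = ‖rpi r π + (γ • Ppi P π) *ᵥ vpi γ P r π‖ :=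
          congrArg _ (vpi_eq_rpi_add hγ0 hγ1 hP hπ)
      _ ≤ ‖rpi r π‖ + ‖γ • Ppi P π‖ * ‖vpi γ P r π‖ :=
          norm_add_le_of_le le_rfl (linfty_opNorm_mulVec _ _)
      _ ≤ ‖r‖ + γ * ‖vpi γ P r π‖ := by
          gcongr
          exacts [norm_rpi_le hπ, norm_smul_Ppi_le hγ0 hP hπ]
  rw [le_div_iff₀ (sub_pos.2 hγ1)]
  linarith

theorem abs_vpi_le (hγ0 : 0 ≤ γ) (hγ1 : γ < 1) (hP : ∀ s a, P s a ∈ stdSimplex ℝ S)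
    (hπ : IsPolicy π) (s : S) : |vpi γ P r π s| ≤ ‖r‖ / (1 - γ) :=
  (norm_le_pi_norm _ s).trans (norm_vpi_le hγ0 hγ1 hP hπ)

theorem vpi_le_vstar (hγ0 : 0 ≤ γ) (hγ1 : γ < 1) (hP : ∀ s a, P s a ∈ stdSimplex ℝ S)
    (hπ : IsPolicy π) (s : S) : vpi γ P r π s ≤ vstar γ P r s := by
  refine le_ciSup (f := fun π : {π : S → A → ℝ // IsPolicy π} => vpi γ P r π.1 s) ?_ ⟨π, hπ⟩
  refine ⟨‖r‖ / (1 - γ), ?_⟩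
  rintro _ ⟨π', rfl⟩
  exact (abs_le.1 (abs_vpi_le hγ0 hγ1 hP π'.2 s)).2

theorem abs_vstar_le [Nonempty A] (hγ0 : 0 ≤ γ) (hγ1 : γ < 1)
    (hP : ∀ s a, P s a ∈ stdSimplex ℝ S) (s : S) : |vstar γ P r s| ≤ ‖r‖ / (1 - γ) := by
  obtain ⟨π, hπ⟩ := nonempty_policy (S := S) (A := A)
  exact abs_le.2
    ⟨(abs_le.1 (abs_vpi_le hγ0 hγ1 hP hπ s)).1.trans (vpi_le_vstar hγ0 hγ1 hP hπ s),
      ciSup_le fun π => (abs_le.1 (abs_vpi_le hγ0 hγ1 hP π.2 s)).2⟩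

theorem exists_vstar_le_qstar [Nonempty A] (hγ0 : 0 ≤ γ) (hγ1 : γ < 1)
    (hP : ∀ s a, P s a ∈ stdSimplex ℝ S) (s : S) : ∃ a, vstar γ P r s ≤ qstar γ P r s a := by
  obtain ⟨a, ha⟩ := Finite.exists_max (qstar γ P r s)
  refine ⟨a, ciSup_le fun π => ?_⟩
  rw [vpi_apply_eq_dotProduct hγ0 hγ1 hP π.2]
  refine dotProduct_le_of_mem_stdSimplex (isPolicy_iff.1 π.2 s) fun b => le_trans ?_ (ha b)
  have hmono : P s b ⬝ᵥ vpi γ P r π.1 ≤ P s b ⬝ᵥ vstar γ P r :=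
    dotProduct_le_dotProduct_of_nonneg_left (vpi_le_vstar hγ0 hγ1 hP π.2) (hP s b).1
  exact add_le_add_right (mul_le_mul_of_nonneg_left hmono hγ0) _

end Value

section Features

omit [Fintype S] [DecidableEq S]

variable {Φ : S → Fin d → ℝ} {c : Fin m → S} {Z : S → Fin m → ℝ} {η : Fin d → ℝ}

theorem phiDot_eq_mulVec (Φ : S → Fin d → ℝ) (θ : Fin d → ℝ) : phiDot Φ θ = of Φ *ᵥ θ :=
  rfl

theorem phiDot_eq_core_average (hΦ : ∀ s j, Φ s j = ∑ i, Z s i * Φ (c i) j) (θ : Fin d → ℝ)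
    (s : S) : phiDot Φ θ s = Z s ⬝ᵥ phiDot Φ θ ∘ c := by
  have hfactor : of Φ = of Z * of (Φ ∘ c) := by
    ext s j
    exact hΦ s j
  calc phiDot Φ θ s = ((of Z * of (Φ ∘ c)) *ᵥ θ) s := by rw [← hfactor, phiDot_eq_mulVec]
    _ = Z s ⬝ᵥ phiDot Φ θ ∘ c := by rw [← mulVec_mulVec]; rfl

theorem core_weights_mem_stdSimplex (hη : phiDot Φ η = 1) (hZ : ∀ s i, 0 ≤ Z s i)
    (hΦ : ∀ s j, Φ s j = ∑ i, Z s i * Φ (c i) j) (s : S) : Z s ∈ stdSimplex ℝ (Fin m) := by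
  refine ⟨hZ s, ?_⟩
  have hrow := phiDot_eq_core_average hΦ η s
  rw [hη, Pi.one_comp, dotProduct_one] at hrow
  exact hrow.symm

theorem epsApprox_nonneg (Φ : S → Fin d → ℝ) (v : S → ℝ) : 0 ≤ epsApprox Φ v :=
  Real.iInf_nonneg fun _ => Real.iSup_nonneg fun _ => abs_nonneg _

theorem le_mul_epsApprox [Finite S] {v : S → ℝ} {k B : ℝ} (hk : 0 < k)
    (h : ∀ θ e, (∀ s, |v s - phiDot Φ θ s| ≤ e) → B ≤ k * e) : B ≤ k * epsApprox Φ v := by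
  rw [← div_le_iff₀' hk]
  refine le_ciInf fun θ => ?_
  rw [div_le_iff₀' hk]
  exact h θ _ (le_ciSup (Set.finite_range fun s => |v s - phiDot Φ θ s|).bddAbove)

end Features

section LRALP

variable [Nonempty A] {γ : ℝ} {P : S → A → S → ℝ} {r : S → A → ℝ} {Φ : S → Fin d → ℝ}
  {c : Fin m → S} {Z : S → Fin m → ℝ} {η : Fin d → ℝ}

theorem LRALPFeasible.exists_discounted_sub_le {θ θ' : Fin d → ℝ} {e : ℝ}
    (hθ : LRALPFeasible γ P r Φ c θ) (hγ0 : 0 ≤ γ) (hγ1 : γ < 1)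
    (hP : ∀ s a, P s a ∈ stdSimplex ℝ S) (he : ∀ s, |vstar γ P r s - phiDot Φ θ' s| ≤ e)
    (i : Fin m) :
    ∃ a, γ * (P (c i) a ⬝ᵥ (phiDot Φ θ - phiDot Φ θ')) - (1 + γ) * e ≤
      phiDot Φ θ (c i) - phiDot Φ θ' (c i) := by
  obtain ⟨a, ha⟩ := exists_vstar_le_qstar (r := r) hγ0 hγ1 hP (c i)
  refine ⟨a, ?_⟩
  have hθa : r (c i) a + γ * (P (c i) a ⬝ᵥ phiDot Φ θ) ≤ phiDot Φ θ (c i) := by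
    have h : r (c i) a + (γ * (P (c i) a ⬝ᵥ phiDot Φ θ) - phiDot Φ θ (c i)) ≤ 0 := hθ i a
    linarith
  have hva : vstar γ P r (c i) ≤ r (c i) a + γ * (P (c i) a ⬝ᵥ vstar γ P r) := ha
  have havg : γ * (P (c i) a ⬝ᵥ (vstar γ P r - phiDot Φ θ')) ≤ γ * e :=
    mul_le_mul_of_nonneg_left
      (dotProduct_le_of_mem_stdSimplex (hP _ _) fun s => (abs_le.1 (he s)).2) hγ0
  have hcore := (abs_le.1 (he (c i))).1
  rw [dotProduct_sub] at havg ⊢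
  linarith

theorem LRALPFeasible.vstar_sub_phiDot_le_of_approx {θ θ' : Fin d → ℝ} {e : ℝ}
    (hθ : LRALPFeasible γ P r Φ c θ) (hγ0 : 0 ≤ γ) (hγ1 : γ < 1)
    (hP : ∀ s a, P s a ∈ stdSimplex ℝ S) (hη : phiDot Φ η = 1) (hZ : ∀ s i, 0 ≤ Z s i)
    (hΦ : ∀ s j, Φ s j = ∑ i, Z s i * Φ (c i) j)
    (he : ∀ s, |vstar γ P r s - phiDot Φ θ' s| ≤ e) (s : S) :
    vstar γ P r s - phiDot Φ θ s ≤ 2 / (1 - γ) * e := by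
  have hγ : 0 < 1 - γ := sub_pos.2 hγ1
  set k : ℝ := (1 + γ) / (1 - γ) * e with hk
  have hk_mul : k - γ * k = (1 + γ) * e := by rw [hk]; field_simp
  have hk_add : e + k = 2 / (1 - γ) * e := by rw [hk]; field_simp; ring
  have hshift : phiDot Φ (θ - θ' + k • η) = phiDot Φ θ - phiDot Φ θ' + k • 1 := by
    rw [← hη]
    simp only [phiDot_eq_mulVec, mulVec_add, mulVec_sub, mulVec_smul]
  have hnonneg : 0 ≤ phiDot Φ (θ - θ' + k • η) s := by
    refine nonneg_of_discounted_average_le_core hγ0 hγ1 (core_weights_mem_stdSimplex hη hZ hΦ)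
      (phiDot_eq_core_average hΦ _) (fun i => ?_) s
    obtain ⟨a, ha⟩ := hθ.exists_discounted_sub_le hγ0 hγ1 hP he i
    refine ⟨P (c i) a, hP _ _, ?_⟩
    rw [hshift, dotProduct_add, dotProduct_smul, dotProduct_one, (hP (c i) a).2]
    simp only [Pi.add_apply, Pi.sub_apply, Pi.smul_apply, Pi.one_apply, smul_eq_mul, mul_one]
    linarith
  rw [hshift] at hnonneg
  simp only [Pi.add_apply, Pi.sub_apply, Pi.smul_apply, Pi.one_apply, smul_eq_mul, mul_one]
    at hnonneg
  linarith [(abs_le.1 (he s)).2]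

theorem LRALPFeasible.vstar_sub_phiDot_le {θ : Fin d → ℝ}
    (hθ : LRALPFeasible γ P r Φ c θ) (hγ0 : 0 ≤ γ) (hγ1 : γ < 1)
    (hP : ∀ s a, P s a ∈ stdSimplex ℝ S) (hη : phiDot Φ η = 1) (hZ : ∀ s i, 0 ≤ Z s i)
    (hΦ : ∀ s j, Φ s j = ∑ i, Z s i * Φ (c i) j) (s : S) :
    vstar γ P r s - phiDot Φ θ s ≤ 2 / (1 - γ) * epsApprox Φ (vstar γ P r) :=
  le_mul_epsApprox (div_pos two_pos (sub_pos.2 hγ1)) fun _ _ he =>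
    hθ.vstar_sub_phiDot_le_of_approx hγ0 hγ1 hP hη hZ hΦ he s

theorem LRALPFeasible.sum_mul_phiDot_sub_VLRALP_le {θ : Fin d → ℝ} {μ : S → ℝ} {δ : ℝ}
    (hθ : LRALPFeasible γ P r Φ c θ) (hγ0 : 0 ≤ γ) (hγ1 : γ < 1)
    (hP : ∀ s a, P s a ∈ stdSimplex ℝ S) (hη : phiDot Φ η = 1) (hZ : ∀ s i, 0 ≤ Z s i)
    (hΦ : ∀ s j, Φ s j = ∑ i, Z s i * Φ (c i) j)
    (hδ : ∀ s, phiDot Φ θ s - vstar γ P r s ≤ δ) (hμ : μ ∈ stdSimplex ℝ S) :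
    ∑ s, μ s * phiDot Φ θ s - VLRALP γ P r Φ c μ ≤
      δ + 2 / (1 - γ) * epsApprox Φ (vstar γ P r) := by
  refine sub_le_comm.1 (le_csInf ⟨_, θ, hθ, rfl⟩ ?_)
  rintro _ ⟨θ', hθ', rfl⟩
  have havg : μ ⬝ᵥ (phiDot Φ θ - phiDot Φ θ') ≤
      δ + 2 / (1 - γ) * epsApprox Φ (vstar γ P r) := by
    refine dotProduct_le_of_mem_stdSimplex hμ fun s => ?_
    rw [← sub_add_sub_cancel]
    exact add_le_add (hδ s) (hθ'.vstar_sub_phiDot_le hγ0 hγ1 hP hη hZ hΦ s)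
  rw [dotProduct_sub] at havg
  exact sub_le_comm.1 havg

theorem abs_phiDot_le {θ : Fin d → ℝ} {δ : ℝ} (hγ0 : 0 ≤ γ) (hγ1 : γ < 1)
    (hP : ∀ s a, P s a ∈ stdSimplex ℝ S) (hδ : ∀ s, |phiDot Φ θ s - vstar γ P r s| ≤ δ) (s : S) :
    |phiDot Φ θ s| ≤ δ + ‖r‖ / (1 - γ) := by
  rw [← sub_add_cancel (phiDot Φ θ s) (vstar γ P r s)]
  exact (abs_add_le _ _).trans (add_le_add (hδ s) (abs_vstar_le hγ0 hγ1 hP s))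

end LRALP

theorem feasible_theta_bounded_and_subopt_general
    {S A : Type} [Fintype S] [Fintype A] [DecidableEq S] [Nonempty A]
    {d m : ℕ} (γ : ℝ) (hγ0 : 0 ≤ γ) (hγ1 : γ < 1)
    (P : S → A → S → ℝ) (hP0 : ∀ s a s', 0 ≤ P s a s')
    (hP1 : ∀ s a, ∑ s', P s a s' = 1)
    (r : S → A → ℝ) (hr : ∀ s a, |r s a| ≤ 1)
    (Φ : S → Fin d → ℝ) (hfeat : ∃ η : Fin d → ℝ, ∀ s, phiDot Φ η s = 1)
    (c : Fin m → S)
    (hcore : ∃ Z : S → Fin m → ℝ, (∀ s i, 0 ≤ Z s i) ∧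
      ∀ s j, Φ s j = ∑ i, Z s i * Φ (c i) j)
    (θ : Fin d → ℝ)
    (hθv : ∀ s, |phiDot Φ θ s - vstar γ P r s| ≤
      2 * epsApprox Φ (vstar γ P r) / (1 - γ))
    (hfeas : LRALPFeasible γ P r Φ c θ) :
    √(∑ i : Fin m, (phiDot Φ θ (c i)) ^ 2) ≤
        (1 + 2 * epsApprox Φ (vstar γ P r)) * √m / (1 - γ) ∧
      ∀ μ : S → ℝ, (∀ s, 0 ≤ μ s) → (∑ s, μ s = 1) →
        ∑ s, μ s * phiDot Φ θ s - VLRALP γ P r Φ c μ ≤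
          4 * epsApprox Φ (vstar γ P r) / (1 - γ) := by
  obtain ⟨η, hη⟩ := hfeat
  obtain ⟨Z, hZ, hΦ⟩ := hcore
  have hP (s : S) (a : A) : P s a ∈ stdSimplex ℝ S := ⟨hP0 s a, hP1 s a⟩
  have : 0 < 1 - γ := sub_pos.2 hγ1
  set ε := epsApprox Φ (vstar γ P r)
  have hε0 : 0 ≤ ε := epsApprox_nonneg _ _
  have hr1 : ‖r‖ ≤ 1 := (pi_norm_le_iff_of_nonneg zero_le_one).2 fun s =>
    (pi_norm_le_iff_of_nonneg zero_le_one).2 (hr s)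
  refine ⟨?_, fun μ hμ0 hμ1 => ?_⟩
  · have hB (i : Fin m) : |phiDot Φ θ (c i)| ≤ 2 * ε / (1 - γ) + 1 / (1 - γ) :=
      (abs_phiDot_le hγ0 hγ1 hP hθv (c i)).trans (by gcongr)
    refine (sqrt_sum_sq_le_sqrt_card_mul (by positivity) hB).trans_eq ?_
    rw [Fintype.card_fin]
    ring
  · refine (hfeas.sum_mul_phiDot_sub_VLRALP_le hγ0 hγ1 hP (funext hη) hZ hΦ
      (fun s => (abs_le.1 (hθv s)).2) ⟨hμ0, hμ1⟩).trans_eq ?_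
    ring

/-- a near-optimal feasible `θ` has `‖Φ*θ‖₂ ≤ (9/8)√m/(1−γ)` and is at most
`12 ε_approx/(1−γ)`-suboptimal for LRALP with any initial distribution `μ`. -/
theorem feasible_theta_bounded_and_subopt
    {S A : Type} [Fintype S] [Fintype A] [DecidableEq S] [Nonempty S] [Nonempty A]
    {d m : ℕ} (γ : ℝ) (hγ0 : 0 ≤ γ) (hγ1 : γ < 1)
    (P : S → A → S → ℝ) (hP0 : ∀ s a s', 0 ≤ P s a s')
    (hP1 : ∀ s a, ∑ s', P s a s' = 1)
    (r : S → A → ℝ) (hr : ∀ s a, |r s a| ≤ 1)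
    (Φ : S → Fin d → ℝ) (hfeat : ∃ η : Fin d → ℝ, ∀ s, phiDot Φ η s = 1)
    (c : Fin m → S) (hc : Function.Injective c)
    (hcore : ∃ Z : S → Fin m → ℝ, (∀ s i, 0 ≤ Z s i) ∧
      ∀ s j, Φ s j = ∑ i, Z s i * Φ (c i) j)
    (hε : epsApprox Φ (vstar γ P r) ≤ 1 / 16)
    (θ : Fin d → ℝ)
    (hθv : ∀ s, |phiDot Φ θ s - vstar γ P r s| ≤
      2 * epsApprox Φ (vstar γ P r) / (1 - γ))
    (hfeas : LRALPFeasible γ P r Φ c θ) :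
    Real.sqrt (∑ i : Fin m, (phiDot Φ θ (c i)) ^ 2) ≤
        (9 / 8) * Real.sqrt m / (1 - γ) ∧
      ∀ μ : S → ℝ, (∀ s, 0 ≤ μ s) → (∑ s, μ s = 1) →
        ∑ s, μ s * phiDot Φ θ s - VLRALP γ P r Φ c μ ≤
          12 * epsApprox Φ (vstar γ P r) / (1 - γ) := by
  have : 0 < 1 - γ := sub_pos.2 hγ1
  have hε0 : 0 ≤ epsApprox Φ (vstar γ P r) := epsApprox_nonneg _ _
  obtain ⟨hnorm, hsubopt⟩ := feasible_theta_bounded_and_subopt_general γ hγ0 hγ1 P hP0 hP1 r hr Φ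
    hfeat c hcore θ hθv hfeas
  exact ⟨hnorm.trans (by gcongr; linarith), fun μ hμ0 hμ1 =>
    (hsubopt μ hμ0 hμ1).trans (by gcongr; norm_num)⟩

end MDPPlan
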